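/- arXiv:1303.4040 — 2 statements merged into one kernel-verified Lean document; each statement's English description precedes it below -/
import Mathlib

section
/- Let α₁, …, α_M be pairwise distinct complex numbers with Re α_m > 0 and let P₁, …, P_M be nonzero polynomials with complex coefficients such that the function h(t) = Σ_{m=1}^M P_m(t) e^{-α_m t} is real-valued for all t > 0. Then Q_h[f] ≥ 0 for all f ∈ C_c^∞((0,∞)) if and only if every α_m is a positive real number and every P_m is a constant polynomial equal to a positive real number. Likewise, Q_h[f] ≤ 0 for all f ∈ C_c^∞((0,∞)) if and only if every α_m is a positive real number and every P_m is a constant polynomial equal to a negative real number. -/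
open MeasureTheory
open scoped ComplexOrder

noncomputable section

/-- Complex-valued test functions: smooth, compactly supported, support inside `(0,∞)`. -/
def IsTestFun (f : ℝ → ℂ) : Prop :=
  ContDiff ℝ (⊤ : ℕ∞) f ∧ HasCompactSupport f ∧ tsupport f ⊆ Set.Ioi 0

/-- The Hankel quadratic form `Q_h[f] = ∫₀^∞∫₀^∞ h(t+s) f(s) conj(f(t)) ds dt`. -/
def hankelQF (h : ℝ → ℂ) (f : ℝ → ℂ) : ℂ :=
  ∫ t in Set.Ioi (0:ℝ), ∫ s in Set.Ioi (0:ℝ), h (t + s) * f s * (starRingEnd ℂ) (f t)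

/-- For `c ≠ 0` the operator `p ↦ p' + c p` is injective on polynomials. -/
lemma eq_zero_of_derivative_add_C_mul_eq_zero {c : ℂ} (hc : c ≠ 0) {p : Polynomial ℂ}
    (h : p.derivative + Polynomial.C c * p = 0) : p = 0 := by
  by_contra hp
  have hdeg : (Polynomial.C c * p).degree = p.degree := Polynomial.degree_C_mul hc
  have hlt := Polynomial.degree_derivative_lt hp
  rw [eq_neg_of_add_eq_zero_left h, Polynomial.degree_neg, hdeg] at hlt
  exact lt_irrefl _ hlt

/-- Termwise differentiation of a vanishing exponential polynomial. -/
lemma sum_derivative_mul_exp_eq_zero {ι : Type*} (S : Finset ι) (a : ι → ℂ)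
    (p : ι → Polynomial ℂ)
    (h : ∀ t : ℝ, 0 < t → ∑ i ∈ S, (p i).eval (t : ℂ) * Complex.exp (a i * t) = 0)
    (t : ℝ) (ht : 0 < t) :
    ∑ i ∈ S, ((p i).derivative + Polynomial.C (a i) * p i).eval (t : ℂ)
      * Complex.exp (a i * t) = 0 := by
  have hd : HasDerivAt
      (fun x : ℝ => ∑ i ∈ S, (p i).eval (x : ℂ) * Complex.exp (a i * x))
      (∑ i ∈ S, ((p i).derivative + Polynomial.C (a i) * p i).eval (t : ℂ)
        * Complex.exp (a i * t)) t := by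
    refine HasDerivAt.fun_sum fun i _ => ?_
    have hz : HasDerivAt (fun z : ℂ => (p i).eval z * Complex.exp (a i * z))
        (((p i).derivative + Polynomial.C (a i) * p i).eval (t : ℂ)
          * Complex.exp (a i * t)) (t : ℂ) := by
      refine (((p i).hasDerivAt (t : ℂ)).mul
        ((hasDerivAt_id (t : ℂ)).const_mul (a i)).cexp).congr_deriv ?_
      simp only [id_eq, Polynomial.eval_add, Polynomial.eval_mul, Polynomial.eval_C]
      ring
    exact hz.comp_ofReal
  have hzero : HasDerivAt
      (fun x : ℝ => ∑ i ∈ S, (p i).eval (x : ℂ) * Complex.exp (a i * x)) 0 t := by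
    refine (hasDerivAt_const t (0 : ℂ)).congr_of_eventuallyEq ?_
    filter_upwards [lt_mem_nhds ht] with x hx using h x hx
  exact hd.unique hzero

/-- Exponential polynomials with distinct exponents are linearly independent on `(0,∞)`. -/
lemma eq_zero_of_sum_eval_mul_exp_eq_zero {ι : Type*} (S : Finset ι) (a : ι → ℂ)
    (ha : Set.InjOn a S) (p : ι → Polynomial ℂ)
    (h : ∀ t : ℝ, 0 < t → ∑ i ∈ S, (p i).eval (t : ℂ) * Complex.exp (a i * t) = 0) :
    ∀ i ∈ S, p i = 0 := by
  classical
  induction S using Finset.induction_on generalizing a p with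
  | empty => simp
  | insert b S hb ih =>
    have hshift : ∀ t : ℝ, 0 < t → ∑ i ∈ insert b S,
        (p i).eval (t : ℂ) * Complex.exp ((a i - a b) * t) = 0 := by
      intro t ht
      have h2 := congrArg (· * Complex.exp (-(a b * t))) (h t ht)
      simp only [zero_mul, Finset.sum_mul] at h2
      rw [← h2]
      refine Finset.sum_congr rfl fun i _ => ?_
      rw [mul_assoc, ← Complex.exp_add]
      ring_nf
    let A : ι → Polynomial ℂ → Polynomial ℂ := fun i q =>
      q.derivative + Polynomial.C (a i - a b) * q
    have hiter : ∀ n : ℕ, ∀ t : ℝ, 0 < t → ∑ i ∈ insert b S,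
        ((A i)^[n] (p i)).eval (t : ℂ) * Complex.exp ((a i - a b) * t) = 0 := by
      intro n
      induction n with
      | zero => simpa using hshift
      | succ n ihn =>
        intro t ht
        simp only [Function.iterate_succ_apply']
        exact sum_derivative_mul_exp_eq_zero _ (fun i => a i - a b) _ ihn t ht
    have hAb : ∀ n : ℕ, (A b)^[n] (p b) = Polynomial.derivative^[n] (p b) := by
      intro n
      congr 2
      funext q
      simp [A]
    have hvan : (A b)^[(p b).natDegree + 1] (p b) = 0 := by
      rw [hAb]
      exact Polynomial.iterate_derivative_eq_zero (Nat.lt_succ_self _)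
    have hSinj : Set.InjOn (fun i => a i - a b) S := fun x hx y hy hxy =>
      ha (Finset.mem_insert_of_mem hx) (Finset.mem_insert_of_mem hy) (sub_left_injective hxy)
    have hS : ∀ i ∈ S, p i = 0 := by
      have hzero := ih (fun i => a i - a b) hSinj
        (fun i => (A i)^[(p b).natDegree + 1] (p i)) (by
          intro t ht
          have := hiter ((p b).natDegree + 1) t ht
          rw [Finset.sum_insert hb, hvan] at this
          simpa using this)
      intro i hi
      have hne : a i - a b ≠ 0 := fun h0 => hb (by
        have := ha (Finset.mem_insert_of_mem hi) (Finset.mem_insert_self b S) (sub_eq_zero.1 h0)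
        rwa [← this])
      have hinj : ∀ n : ℕ, ∀ q, (A i)^[n] q = 0 → q = 0 := by
        intro n
        induction n with
        | zero => simp
        | succ n ihn =>
          intro q hq
          exact eq_zero_of_derivative_add_C_mul_eq_zero hne (ihn _ hq)
      exact hinj _ _ (hzero i hi)
    intro i hi
    rcases Finset.mem_insert.1 hi with rfl | hi
    · refine Polynomial.eq_zero_of_infinite_isRoot _ (Set.Infinite.mono ?_
        ((Set.Ioi_infinite (0 : ℝ)).image Complex.ofReal_injective.injOn))
      rintro _ ⟨t, ht, rfl⟩
      have := hshift t ht
      rw [Finset.sum_insert hb, Finset.sum_eq_zero (fun j hj => by simp [hS j hj])] at this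
      simpa using this
    · exact hS i hi

/-- The moment `∫₀^∞ s^k e^{-βs} f(s) ds`. -/
def expMoment (f : ℝ → ℂ) (β : ℂ) (k : ℕ) : ℂ :=
  ∫ s in Set.Ioi (0 : ℝ), (s : ℂ) ^ k * Complex.exp (-β * s) * f s

lemma IsTestFun.integrable_mul {f : ℝ → ℂ} (hf : IsTestFun f) {g : ℝ → ℂ} (hg : Continuous g) :
    Integrable (fun s => g s * f s) :=
  (hg.mul hf.1.continuous).integrable_of_hasCompactSupport hf.2.1.mul_left

lemma continuous_pow_mul_exp (β : ℂ) (k : ℕ) :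
    Continuous fun s : ℝ => (s : ℂ) ^ k * Complex.exp (-β * s) := by
  fun_prop

/-- The space of test functions. -/
def testFunSubmodule : Submodule ℂ (ℝ → ℂ) where
  carrier := {f | IsTestFun f}
  add_mem' := fun {f g} hf hg => ⟨hf.1.add hg.1, hf.2.1.add hg.2.1,
    (tsupport_add f g).trans (Set.union_subset hf.2.2 hg.2.2)⟩
  zero_mem' := ⟨contDiff_const, HasCompactSupport.zero, by simp [tsupport]⟩
  smul_mem' := fun c f hf => ⟨contDiff_const.smul hf.1, hf.2.1.smul_left (f := fun _ => c),
    (tsupport_smul_subset_right (fun _ => c) f).trans hf.2.2⟩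

/-- The moment as a linear functional on test functions. -/
def expMomentLinear (β : ℂ) (k : ℕ) : testFunSubmodule →ₗ[ℂ] ℂ where
  toFun f := expMoment f β k
  map_add' f g := by
    simp only [expMoment, Submodule.coe_add, Pi.add_apply, mul_add]
    exact integral_add
      (IsTestFun.integrable_mul f.2 (continuous_pow_mul_exp β k)).integrableOn
      (IsTestFun.integrable_mul g.2 (continuous_pow_mul_exp β k)).integrableOn
  map_smul' c f := by
    simp only [expMoment, Submodule.coe_smul, Pi.smul_apply, smul_eq_mul, RingHom.id_apply]
    rw [← integral_const_mul]
    congr 1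
    funext s
    ring

/-- A continuous function annihilating all test functions vanishes on `(0,∞)`. -/
lemma eq_zero_of_integral_mul_testFun_eq_zero {g : ℝ → ℂ} (hg : Continuous g)
    (h : ∀ f : ℝ → ℂ, IsTestFun f → ∫ s in Set.Ioi (0 : ℝ), g s * f s = 0)
    (t : ℝ) (ht : 0 < t) : g t = 0 := by
  have hae := isOpen_Ioi.ae_eq_zero_of_integral_contDiff_smul_eq_zero (U := Set.Ioi (0 : ℝ))
    (μ := volume) (f := g) (hg.locallyIntegrable.locallyIntegrableOn _) (by
      intro φ hφ hφc hφs
      have hts : tsupport (fun s => (φ s : ℂ)) ⊆ tsupport φ :=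
        closure_mono fun s hs => by simpa using hs
      have htest : IsTestFun fun s => (φ s : ℂ) :=
        ⟨Complex.ofRealCLM.contDiff.comp hφ, hφc.of_isClosed_subset (isClosed_tsupport _) hts,
          hts.trans hφs⟩
      rw [← h _ htest, setIntegral_eq_integral_of_forall_compl_eq_zero]
      · simp [mul_comm]
      · intro s hs
        have : φ s = 0 := image_eq_zero_of_notMem_tsupport fun h' => hs (hφs h')
        simp [this])
  have hEq : Set.EqOn g 0 (Set.Ioi (0 : ℝ)) :=
    Measure.eqOn_open_of_ae_eq (μ := volume) ((ae_restrict_iff' measurableSet_Ioi).2 hae)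
      isOpen_Ioi hg.continuousOn continuousOn_const
  exact hEq ht

/-- Finitely many moments of a test function can be prescribed arbitrarily. -/
lemma exists_testFun_expMoment_eq (S : Finset ℂ) (N : ℕ) (v : ℂ → ℕ → ℂ) :
    ∃ f, IsTestFun f ∧ ∀ β ∈ S, ∀ k < N, expMoment f β k = v β k := by
  classical
  let T : testFunSubmodule →ₗ[ℂ] (S × Fin N → ℂ) :=
    LinearMap.pi fun i => expMomentLinear i.1 i.2
  have hT : Function.Surjective T := by
    rw [← LinearMap.dualMap_injective_iff, injective_iff_map_eq_zero]
    intro φ hφ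
    let c : S × Fin N → ℂ := fun i => φ (Pi.single i 1)
    have hφ_apply : ∀ v, φ v = ∑ i, v i * c i := by
      intro v
      rw [LinearMap.pi_apply_eq_sum_univ φ v]
      refine Finset.sum_congr rfl fun i _ => ?_
      simp only [c, smul_eq_mul]
      congr 2
      funext j
      simp [Pi.single_apply, eq_comm]
    let p : S → Polynomial ℂ := fun β => ∑ k : Fin N, Polynomial.monomial (k : ℕ) (c (β, k))
    let g : ℝ → ℂ := fun s => ∑ i : S × Fin N, c i * ((s : ℂ) ^ (i.2 : ℕ) *
      Complex.exp (-(i.1 : ℂ) * s))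
    have hg : Continuous g := by
      unfold g
      fun_prop
    have hgzero := eq_zero_of_integral_mul_testFun_eq_zero hg (by
      intro f hf
      have h0 : φ (T ⟨f, hf⟩) = 0 := LinearMap.congr_fun hφ ⟨f, hf⟩
      rw [hφ_apply] at h0
      rw [← h0]
      simp only [g, Finset.sum_mul]
      rw [integral_finsetSum]
      · refine Finset.sum_congr rfl fun i _ => ?_
        simp only [mul_assoc (c i)]
        rw [integral_const_mul, mul_comm]
        rfl
      · intro i _
        simp only [mul_assoc (c i)]
        exact ((hf.integrable_mul (continuous_pow_mul_exp _ _)).const_mul _).integrableOn)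
    have hp := eq_zero_of_sum_eval_mul_exp_eq_zero Finset.univ (fun β : S => -(β : ℂ))
      (fun x _ y _ hxy => Subtype.ext (neg_injective hxy)) p (by
        intro t ht
        rw [← hgzero t ht]
        simp only [g, p, Fintype.sum_prod_type, Polynomial.eval_finsetSum,
          Polynomial.eval_monomial, Finset.sum_mul, mul_assoc])
    have hc : ∀ i, c i = 0 := by
      rintro ⟨β, k⟩
      have h1 := congrArg (fun q => Polynomial.coeff q (k : ℕ)) (hp β (Finset.mem_univ _))
      simpa [p, Polynomial.finsetSum_coeff, Polynomial.coeff_monomial, Fin.val_inj] using h1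
    refine LinearMap.ext fun v => ?_
    simp [hφ_apply, hc]
  obtain ⟨f, hf⟩ := hT fun i => v i.1 i.2
  exact ⟨f, f.2, fun β hβ k hk => congrFun hf (⟨β, hβ⟩, ⟨k, hk⟩)⟩

/-- The sesquilinear form on moment families induced by the kernel `Σ_m P_m(t) e^{-α_m t}`. -/
def momentForm (M N : ℕ) (α : ℕ → ℂ) (P : ℕ → Polynomial ℂ) (u v : ℂ → ℕ → ℂ) : ℂ :=
  ∑ m ∈ Finset.range M, ∑ n ∈ Finset.range N, ∑ j ∈ Finset.range (n + 1),
    (P m).coeff n * (n.choose j : ℂ) * u (α m) (n - j)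
      * (starRingEnd ℂ) (v ((starRingEnd ℂ) (α m)) j)

lemma momentForm_add_smul (M N : ℕ) (α : ℕ → ℂ) (P : ℕ → Polynomial ℂ) (w u : ℂ → ℕ → ℂ)
    (z : ℂ) : momentForm M N α P (w + z • u) (w + z • u) =
      momentForm M N α P w w + z * momentForm M N α P u w
        + (starRingEnd ℂ) z * momentForm M N α P w u
        + z * (starRingEnd ℂ) z * momentForm M N α P u u := by
  simp only [momentForm, Finset.mul_sum, ← Finset.sum_add_distrib]
  refine Finset.sum_congr rfl fun m _ => Finset.sum_congr rfl fun n _ =>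
    Finset.sum_congr rfl fun j _ => ?_
  simp only [Pi.add_apply, Pi.smul_apply, smul_eq_mul, map_add, map_mul]
  ring

lemma expMoment_conj (f : ℝ → ℂ) (β : ℂ) (k : ℕ) :
    ∫ t in Set.Ioi (0 : ℝ), (t : ℂ) ^ k * Complex.exp (-β * t) * (starRingEnd ℂ) (f t) =
      (starRingEnd ℂ) (expMoment f ((starRingEnd ℂ) β) k) := by
  rw [expMoment, ← integral_conj]
  congr 1
  funext t
  simp [← Complex.exp_conj]

/-- The Hankel form of an exponential polynomial in terms of moments. -/
lemma hankelQF_eq_momentForm (M N : ℕ) (α : ℕ → ℂ) (P : ℕ → Polynomial ℂ)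
    (hN : ∀ m < M, (P m).natDegree < N) {f : ℝ → ℂ} (hf : IsTestFun f) :
    hankelQF (fun t : ℝ =>
      ∑ m ∈ Finset.range M, (P m).eval (t : ℂ) * Complex.exp (-(α m) * t)) f =
      momentForm M N α P (expMoment f) (expMoment f) := by
  have hfc : Continuous fun t => (starRingEnd ℂ) (f t) :=
    Complex.continuous_conj.comp hf.1.continuous
  have hfcs : HasCompactSupport fun t => (starRingEnd ℂ) (f t) :=
    hf.2.1.comp_left (g := starRingEnd ℂ) (map_zero _)
  have hker : ∀ t s : ℝ,
      (∑ m ∈ Finset.range M, (P m).eval ((t + s : ℝ) : ℂ) * Complex.exp (-(α m) * (t + s : ℝ)))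
        * f s * (starRingEnd ℂ) (f t) =
      ∑ m ∈ Finset.range M, ∑ n ∈ Finset.range N, ∑ j ∈ Finset.range (n + 1),
        ((P m).coeff n * (n.choose j : ℂ) *
          ((t : ℂ) ^ j * Complex.exp (-(α m) * t) * (starRingEnd ℂ) (f t))) *
          ((s : ℂ) ^ (n - j) * Complex.exp (-(α m) * s) * f s) := by
    intro t s
    simp only [Finset.sum_mul]
    refine Finset.sum_congr rfl fun m hm => ?_
    rw [Polynomial.eval_eq_sum_range' (hN m (Finset.mem_range.1 hm))]
    simp only [Finset.sum_mul]
    refine Finset.sum_congr rfl fun n _ => ?_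
    push_cast
    rw [add_pow, mul_add, Complex.exp_add]
    simp only [Finset.sum_mul, Finset.mul_sum]
    refine Finset.sum_congr rfl fun j _ => ?_
    ring
  have hints : ∀ (c β : ℂ) (k : ℕ), IntegrableOn
      (fun s : ℝ => c * ((s : ℂ) ^ k * Complex.exp (-β * s) * f s)) (Set.Ioi 0) := fun c β k =>
    ((hf.integrable_mul (continuous_pow_mul_exp β k)).const_mul c).integrableOn
  have hintt : ∀ (c d β : ℂ) (k : ℕ), IntegrableOn
      (fun t : ℝ => c * ((t : ℂ) ^ k * Complex.exp (-β * t) * (starRingEnd ℂ) (f t)) * d)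
      (Set.Ioi 0) := fun c d β k =>
    (((((continuous_pow_mul_exp β k).mul hfc).integrable_of_hasCompactSupport
      hfcs.mul_left).const_mul c).mul_const d).integrableOn
  have hinner : ∀ t : ℝ, ∫ s in Set.Ioi (0 : ℝ),
      (∑ m ∈ Finset.range M, (P m).eval ((t + s : ℝ) : ℂ) * Complex.exp (-(α m) * (t + s : ℝ)))
        * f s * (starRingEnd ℂ) (f t) =
      ∑ m ∈ Finset.range M, ∑ n ∈ Finset.range N, ∑ j ∈ Finset.range (n + 1),
        ((P m).coeff n * (n.choose j : ℂ)) *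
          ((t : ℂ) ^ j * Complex.exp (-(α m) * t) * (starRingEnd ℂ) (f t)) *
          expMoment f (α m) (n - j) := by
    intro t
    simp only [hker]
    rw [integral_finsetSum _ fun m _ => integrable_finsetSum _ fun n _ =>
      integrable_finsetSum _ fun j _ => hints _ _ _]
    refine Finset.sum_congr rfl fun m _ => ?_
    rw [integral_finsetSum _ fun n _ => integrable_finsetSum _ fun j _ => hints _ _ _]
    refine Finset.sum_congr rfl fun n _ => ?_
    rw [integral_finsetSum _ fun j _ => hints _ _ _]
    refine Finset.sum_congr rfl fun j _ => ?_
    rw [integral_const_mul]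
    rfl
  simp only [hankelQF, hinner]
  rw [integral_finsetSum _ fun m _ => integrable_finsetSum _ fun n _ =>
    integrable_finsetSum _ fun j _ => hintt _ _ _ _, momentForm]
  refine Finset.sum_congr rfl fun m _ => ?_
  rw [integral_finsetSum _ fun n _ => integrable_finsetSum _ fun j _ => hintt _ _ _ _]
  refine Finset.sum_congr rfl fun n _ => ?_
  rw [integral_finsetSum _ fun j _ => hintt _ _ _ _]
  refine Finset.sum_congr rfl fun j _ => ?_
  rw [integral_mul_const, integral_const_mul, expMoment_conj]
  ring

/-- The moment family with a single nonzero entry `1`. -/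
def unitMoment (β : ℂ) (k : ℕ) : ℂ → ℕ → ℂ :=
  fun γ l => if γ = β ∧ l = k then 1 else 0

lemma momentForm_unitMoment {M N : ℕ} {α : ℕ → ℂ} {P : ℕ → Polynomial ℂ}
    (hdist : ∀ m < M, ∀ n < M, m ≠ n → α m ≠ α n) {m : ℕ} (hm : m < M)
    {k j : ℕ} (hN : k + j < N) :
    momentForm M N α P (unitMoment (α m) k) (unitMoment ((starRingEnd ℂ) (α m)) j) =
      (P m).coeff (k + j) * ((k + j).choose j : ℂ) := by
  rw [momentForm, Finset.sum_eq_single_of_mem m (Finset.mem_range.2 hm),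
    Finset.sum_eq_single_of_mem (k + j) (Finset.mem_range.2 hN),
    Finset.sum_eq_single_of_mem j (Finset.mem_range.2 (by omega))]
  · simp [unitMoment]
  · intro i _ hi
    simp [unitMoment, hi]
  · intro n _ hn
    refine Finset.sum_eq_zero fun i hi => ?_
    have hi := Finset.mem_range.1 hi
    by_cases hij : i = j
    · have : n - i ≠ k := by omega
      simp [unitMoment, this]
    · simp [unitMoment, hij]
  · intro n hn hnm
    have := hdist n (Finset.mem_range.1 hn) m hm hnm
    simp [unitMoment, this]

lemma momentForm_unitMoment_eq_zero {M N : ℕ} {α : ℕ → ℂ} {P : ℕ → Polynomial ℂ}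
    {β γ : ℂ} (h : γ ≠ (starRingEnd ℂ) β) (k j : ℕ) :
    momentForm M N α P (unitMoment β k) (unitMoment γ j) = 0 := by
  refine Finset.sum_eq_zero fun m _ => Finset.sum_eq_zero fun n _ =>
    Finset.sum_eq_zero fun i _ => ?_
  by_cases hβ : α m = β
  · simp [unitMoment, hβ, h.symm]
  · simp [unitMoment, hβ]

/-- If `A + z C + z̄ D ≥ 0` for all complex `z`, then `D = 0`. -/
lemma eq_zero_of_forall_nonneg_add {A C D : ℂ}
    (h : ∀ z : ℂ, 0 ≤ A + z * C + (starRingEnd ℂ) z * D) : D = 0 := by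
  have key : ∀ E : ℂ, (∀ r : ℝ, 0 ≤ A + r * E) → E = 0 := by
    intro E hE
    have him : ∀ r : ℝ, A.im + r * E.im = 0 := fun r => by
      have := (Complex.nonneg_iff.1 (hE r)).2
      simpa using this.symm
    have hre : ∀ r : ℝ, 0 ≤ A.re + r * E.re := fun r => by
      have := (Complex.nonneg_iff.1 (hE r)).1
      simpa using this
    refine Complex.ext ?_ ?_
    · by_contra hne
      have hne : E.re ≠ 0 := hne
      have := hre (-(A.re + 1) / E.re)
      rw [div_mul_cancel₀ _ hne] at this
      linarith
    · have h0 := him 0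
      have h1 := him 1
      simp only [Complex.zero_im]
      linarith
  have h1 := key (C + D) fun r => by
    have := h r
    rw [Complex.conj_ofReal] at this
    convert this using 1
    ring
  have h2 := key (Complex.I * (C - D)) fun r => by
    have := h (r * Complex.I)
    rw [map_mul, Complex.conj_ofReal, Complex.conj_I] at this
    convert this using 1
    ring
  have h3 : C - D = 0 := by simpa using h2
  linear_combination (h1 - h3) / 2

/-- Nonnegativity of the Hankel form of an exponential polynomial. -/
theorem hankelQF_nonneg_iff (M : ℕ) (α : ℕ → ℂ) (P : ℕ → Polynomial ℂ)
    (hdist : ∀ m < M, ∀ n < M, m ≠ n → α m ≠ α n)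
    (hre : ∀ m < M, 0 < (α m).re)
    (hPne : ∀ m < M, P m ≠ 0) :
    (∀ f : ℝ → ℂ, IsTestFun f →
        0 ≤ hankelQF (fun t : ℝ =>
          ∑ m ∈ Finset.range M, (P m).eval (t : ℂ) * Complex.exp (-(α m) * t)) f) ↔
      (∀ m < M, (∃ a : ℝ, 0 < a ∧ α m = (a : ℂ)) ∧
        ∃ c : ℝ, 0 < c ∧ P m = Polynomial.C (c : ℂ)) := by
  classical
  constructor
  · intro h m hm
    let N := 2 * (Finset.range M).sup (fun m => (P m).natDegree) + 1
    have hdeg : ∀ m < M, 2 * (P m).natDegree < N := fun m hm => by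
      have := Finset.le_sup (f := fun m => (P m).natDegree) (Finset.mem_range.2 hm)
      simp only [N]
      omega
    have hform : ∀ u : ℂ → ℕ → ℂ, 0 ≤ momentForm M N α P u u := by
      intro u
      obtain ⟨f, hf, hfu⟩ := exists_testFun_expMoment_eq
        ((Finset.range M).image α ∪ (Finset.range M).image fun m => (starRingEnd ℂ) (α m)) N u
      have hQ := h f hf
      rw [hankelQF_eq_momentForm M N α P (fun m hm => by have := hdeg m hm; omega) hf] at hQ
      convert hQ using 1
      refine Finset.sum_congr rfl fun m hm => Finset.sum_congr rfl fun n hn =>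
        Finset.sum_congr rfl fun j hj => ?_
      have hn := Finset.mem_range.1 hn
      have hj := Finset.mem_range.1 hj
      rw [hfu _ (Finset.mem_union_left _ (Finset.mem_image_of_mem _ hm)) _ (by omega),
        hfu _ (Finset.mem_union_right _ (Finset.mem_image_of_mem _ hm)) _ (by omega)]
    have hdm := hdeg m hm
    have hoff : momentForm M N α P (unitMoment (α m) 0)
        (unitMoment ((starRingEnd ℂ) (α m)) (P m).natDegree) ≠ 0 := by
      rw [momentForm_unitMoment hdist hm (by omega)]
      simpa using hPne m hm
    have hdiag : momentForm M N α P (unitMoment ((starRingEnd ℂ) (α m)) (P m).natDegree)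
        (unitMoment ((starRingEnd ℂ) (α m)) (P m).natDegree) ≠ 0 := by
      intro h0
      refine hoff (eq_zero_of_forall_nonneg_add
        (A := momentForm M N α P (unitMoment (α m) 0) (unitMoment (α m) 0))
        (C := momentForm M N α P (unitMoment ((starRingEnd ℂ) (α m)) (P m).natDegree)
          (unitMoment (α m) 0)) fun z => ?_)
      have := hform (unitMoment (α m) 0 +
        z • unitMoment ((starRingEnd ℂ) (α m)) (P m).natDegree)
      rwa [momentForm_add_smul, h0, mul_zero, add_zero] at this
    have hconj : (starRingEnd ℂ) (α m) = α m := by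
      by_contra hne
      exact hdiag (momentForm_unitMoment_eq_zero (by simpa using hne) _ _)
    have hd0 : (P m).natDegree = 0 := by
      by_contra hne
      refine hdiag ?_
      nth_rewrite 1 [hconj]
      rw [momentForm_unitMoment hdist hm (by omega),
        Polynomial.coeff_eq_zero_of_natDegree_lt (by omega), zero_mul]
    refine ⟨⟨(α m).re, hre m hm, (Complex.conj_eq_iff_re.1 hconj).symm⟩, ?_⟩
    have hpos := hform (unitMoment (α m) 0)
    have hval := momentForm_unitMoment (N := N) (P := P) hdist hm (k := 0) (j := 0) (by omega)
    rw [hconj] at hval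
    rw [hval] at hpos
    have hcoeff : (P m).coeff 0 ≠ 0 := by
      have := hPne m hm
      rwa [← Polynomial.leadingCoeff_ne_zero, Polynomial.leadingCoeff, hd0] at this
    have hpos' : 0 < (P m).coeff 0 := lt_of_le_of_ne (by simpa using hpos) hcoeff.symm
    obtain ⟨hlt, him⟩ := Complex.pos_iff.1 hpos'
    refine ⟨((P m).coeff 0).re, hlt, ?_⟩
    have hcast : ((((P m).coeff 0).re : ℝ) : ℂ) = (P m).coeff 0 :=
      Complex.ext (by simp) (by simpa using him)
    rw [hcast]
    exact Polynomial.eq_C_of_natDegree_eq_zero hd0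
  · intro h f hf
    rw [hankelQF_eq_momentForm M 1 α P (fun m hm => by
      obtain ⟨c, _, hP⟩ := (h m hm).2
      simp [hP]) hf, momentForm]
    refine Finset.sum_nonneg fun m hm => ?_
    obtain ⟨⟨a, _, ha⟩, c, hc, hP⟩ := h m (Finset.mem_range.1 hm)
    simp only [Finset.sum_range_one, zero_add, hP, ha, Complex.conj_ofReal,
      Polynomial.coeff_C_zero, Nat.choose_self, Nat.cast_one, one_mul, mul_assoc,
      Nat.sub_self]
    exact mul_nonneg (by exact_mod_cast hc.le) (mul_star_self_nonneg _)

/-- A finite-rank Hankel kernel `h(t) = Σ_m P_m(t) e^{-α_m t}` (real-valued on `(0,∞)`)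
gives a positive (resp. negative) quadratic form iff all `α_m` are positive reals and all
`P_m` are positive (resp. negative) real constants. -/
theorem finite_rank_hankel_sign_definite (M : ℕ) (α : ℕ → ℂ) (P : ℕ → Polynomial ℂ)
    (hdist : ∀ m < M, ∀ n < M, m ≠ n → α m ≠ α n)
    (hre : ∀ m < M, 0 < (α m).re)
    (hPne : ∀ m < M, P m ≠ 0)
    (hreal : ∀ t : ℝ, 0 < t →
      (∑ m ∈ Finset.range M, (P m).eval (t : ℂ) * Complex.exp (-(α m) * t)).im = 0) :
    ((∀ f : ℝ → ℂ, IsTestFun f →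
        0 ≤ hankelQF (fun t : ℝ =>
          ∑ m ∈ Finset.range M, (P m).eval (t : ℂ) * Complex.exp (-(α m) * t)) f) ↔
      (∀ m < M, (∃ a : ℝ, 0 < a ∧ α m = (a : ℂ)) ∧
        ∃ c : ℝ, 0 < c ∧ P m = Polynomial.C (c : ℂ)))
    ∧ ((∀ f : ℝ → ℂ, IsTestFun f →
        hankelQF (fun t : ℝ =>
          ∑ m ∈ Finset.range M, (P m).eval (t : ℂ) * Complex.exp (-(α m) * t)) f ≤ 0) ↔
      (∀ m < M, (∃ a : ℝ, 0 < a ∧ α m = (a : ℂ)) ∧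
        ∃ c : ℝ, c < 0 ∧ P m = Polynomial.C (c : ℂ))) := by
  refine ⟨hankelQF_nonneg_iff M α P hdist hre hPne, ?_⟩
  have hneg := hankelQF_nonneg_iff M α (fun m => -P m) hdist hre
    (fun m hm => neg_ne_zero.2 (hPne m hm))
  have hQ : ∀ f : ℝ → ℂ, hankelQF (fun t : ℝ =>
      ∑ m ∈ Finset.range M, (-P m).eval (t : ℂ) * Complex.exp (-(α m) * t)) f =
      -hankelQF (fun t : ℝ =>
        ∑ m ∈ Finset.range M, (P m).eval (t : ℂ) * Complex.exp (-(α m) * t)) f := by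
    intro f
    simp only [hankelQF, Polynomial.eval_neg, neg_mul, Finset.sum_neg_distrib, integral_neg]
  simp only [hQ, neg_nonneg] at hneg
  rw [hneg]
  refine forall₂_congr fun m _ => and_congr_right fun _ => ?_
  constructor
  · rintro ⟨c, hc, hP⟩
    exact ⟨-c, neg_neg_of_pos hc, by rw [← neg_neg (P m), hP]; simp⟩
  · rintro ⟨c, hc, hP⟩
    exact ⟨-c, neg_pos.2 hc, by rw [hP]; simp⟩
end
end

section
/- Let r > 0 and set h(t) = e^{-t^r} for t > 0. If 0 < r ≤ 1, then Q_h[f] ≥ 0 for all f ∈ C_c^∞((0,∞)). If r > 1, then the form is not sign-definite: there exist f₊, f₋ ∈ C_c^∞((0,∞)) with Q_h[f₊] > 0 and Q_h[f₋] < 0. -/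
open MeasureTheory
open scoped ComplexOrder

noncomputable section

section

open Set Filter Topology

/-- A real function `h` is a positive definite Hankel kernel when the infinite matrix
`h (s + t)`, `s, t > 0`, is positive semidefinite. -/
def IsPosDefHankel (h : ℝ → ℝ) : Prop :=
  (Matrix.of fun s t : Ioi (0 : ℝ) => ((h (s + t) : ℝ) : ℂ)).PosSemidef

namespace IsPosDefHankel

theorem iff_sum_nonneg {h : ℝ → ℝ} :
    IsPosDefHankel h ↔ ∀ (S : Finset (Ioi (0 : ℝ))) (c : Ioi (0 : ℝ) → ℂ),
      0 ≤ ∑ s ∈ S, ∑ t ∈ S, star (c s) * ((h (s + t) : ℝ) : ℂ) * c t := by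
  classical
  constructor
  · intro H S c
    have := H.2 (Finsupp.indicator S fun s _ => c s)
    rw [Finsupp.sum_of_support_subset _ (Finsupp.support_indicator_subset S _) _ (by simp)] at this
    refine this.trans_eq (Finset.sum_congr rfl fun s hs => ?_)
    rw [Finsupp.sum_of_support_subset _ (Finsupp.support_indicator_subset S _) _ (by simp)]
    refine Finset.sum_congr rfl fun t ht => ?_
    simp [Finsupp.indicator_of_mem hs, Finsupp.indicator_of_mem ht]
  · intro H
    refine ⟨?_, fun x => H x.support x⟩
    ext s t
    simp [add_comm]

theorem sum_nonneg {h : ℝ → ℝ} (hh : IsPosDefHankel h) {S : Finset ℝ} (hS : ∀ s ∈ S, 0 < s)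
    (c : ℝ → ℂ) : 0 ≤ ∑ s ∈ S, ∑ t ∈ S, star (c s) * ((h (s + t) : ℝ) : ℂ) * c t := by
  classical
  refine (iff_sum_nonneg.1 hh (S.subtype (· ∈ Ioi 0)) fun s => c s).trans_eq ?_
  have hS' : ∀ s ∈ S, s ∈ Ioi (0 : ℝ) := hS
  rw [← Finset.sum_subtype_of_mem _ hS']
  refine Finset.sum_congr rfl fun s _ => ?_
  rw [← Finset.sum_subtype_of_mem _ hS']

theorem congr {h g : ℝ → ℝ} (hh : IsPosDefHankel h) (hg : ∀ t, 0 < t → h t = g t) :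
    IsPosDefHankel g := by
  unfold IsPosDefHankel at hh ⊢
  convert! hh using 1
  ext s t
  simp [hg _ (add_pos s.2 t.2)]

theorem of_mul {h g : ℝ → ℝ} (H : ∀ s t, h (s + t) = g s * g t) : IsPosDefHankel h := by
  refine iff_sum_nonneg.2 fun S c => ?_
  have : ∑ s ∈ S, ∑ t ∈ S, star (c s) * ((h (s + t) : ℝ) : ℂ) * c t
      = star (∑ s ∈ S, c s * (g s : ℂ)) * ∑ t ∈ S, c t * (g t : ℂ) := by
    rw [star_sum, Finset.sum_mul_sum]
    refine Finset.sum_congr rfl fun s _ => Finset.sum_congr rfl fun t _ => ?_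
    simp [H]
    ring
  rw [this]
  exact star_mul_self_nonneg _

theorem const {a : ℝ} (ha : 0 ≤ a) : IsPosDefHankel fun _ => a :=
  of_mul (g := fun _ => √a) fun _ _ => (Real.mul_self_sqrt ha).symm

theorem add {h g : ℝ → ℝ} (hh : IsPosDefHankel h) (hg : IsPosDefHankel g) :
    IsPosDefHankel fun t => h t + g t := by
  unfold IsPosDefHankel
  convert! Matrix.PosSemidef.add hh hg using 1
  ext s t
  simp

theorem mul {h g : ℝ → ℝ} (hh : IsPosDefHankel h) (hg : IsPosDefHankel g) :
    IsPosDefHankel fun t => h t * g t := by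
  unfold IsPosDefHankel
  convert! Matrix.PosSemidef.hadamard hh hg using 1
  ext s t
  simp

theorem pow {h : ℝ → ℝ} (hh : IsPosDefHankel h) (n : ℕ) : IsPosDefHankel fun t => h t ^ n := by
  induction n with
  | zero => simpa using const zero_le_one
  | succ n ih => simpa only [pow_succ] using ih.mul hh

theorem of_tendsto {h : ℕ → ℝ → ℝ} {g : ℝ → ℝ} (hh : ∀ n, IsPosDefHankel (h n))
    (hg : ∀ t, 0 < t → Tendsto (fun n => h n t) atTop (𝓝 (g t))) : IsPosDefHankel g := by
  refine iff_sum_nonneg.2 fun S c => ?_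
  refine ge_of_tendsto' (f := fun n => ∑ s ∈ S, ∑ t ∈ S,
    star (c s) * ((h n (s + t) : ℝ) : ℂ) * c t) (x := atTop) ?_
    fun n => iff_sum_nonneg.1 (hh n) S c
  refine tendsto_finsetSum _ fun s _ => tendsto_finsetSum _ fun t _ => ?_
  exact (((Complex.continuous_ofReal.tendsto _).comp
    (hg _ (add_pos s.2 t.2))).const_mul _).mul_const _

theorem exp {h : ℝ → ℝ} (hh : IsPosDefHankel h) : IsPosDefHankel fun t => Real.exp (h t) := by
  refine of_tendsto (h := fun n t => (1 + h t / n) ^ n) (fun n => ?_)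
    fun t _ => Real.tendsto_one_add_div_pow_exp _
  simpa only [div_eq_mul_inv] using
    ((const zero_le_one).add (hh.mul (const (inv_nonneg.2 n.cast_nonneg)))).pow n

theorem setIntegral {g : ℝ → ℝ → ℝ} {μ : Measure ℝ} {A : Set ℝ} (hA : MeasurableSet A)
    (hg : ∀ x ∈ A, IsPosDefHankel (g x))
    (hi : ∀ t, 0 < t → IntegrableOn (fun x => g x t) A μ) :
    IsPosDefHankel fun t => ∫ x in A, g x t ∂μ := by
  refine iff_sum_nonneg.2 fun S c => ?_
  have hint : ∀ s t : Ioi (0 : ℝ), Integrable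
      (fun x => star (c s) * ((g x (s + t) : ℝ) : ℂ) * c t) (μ.restrict A) := fun s t =>
    ((hi _ (add_pos s.2 t.2)).ofReal.const_mul _).mul_const _
  have : ∑ s ∈ S, ∑ t ∈ S, star (c s) * ((∫ x in A, g x (s + t) ∂μ : ℝ) : ℂ) * c t
      = ∫ x in A, ∑ s ∈ S, ∑ t ∈ S, star (c s) * ((g x (s + t) : ℝ) : ℂ) * c t ∂μ := by
    rw [integral_finsetSum _ fun s _ => integrable_finsetSum _ fun t _ => hint s t]
    refine Finset.sum_congr rfl fun s _ => ?_
    rw [integral_finsetSum _ fun t _ => hint s t]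
    refine Finset.sum_congr rfl fun t _ => ?_
    rw [integral_mul_const, integral_const_mul, integral_complex_ofReal]
  rw [this]
  exact integral_nonneg_of_ae
    (ae_restrict_of_forall_mem hA fun x hx => iff_sum_nonneg.1 (hg x hx) S c)

theorem inv_add {x : ℝ} (hx : 0 < x) : IsPosDefHankel fun t => (x + t)⁻¹ := by
  have H : IsPosDefHankel fun t => ∫ y in Ioi (0 : ℝ), Real.exp (-(x + t) * y) := by
    refine setIntegral measurableSet_Ioi (fun y _ => ?_) fun t ht =>
      integrableOn_exp_mul_Ioi (by linarith) 0
    refine of_mul (g := fun s => Real.exp (-(x / 2 + s) * y)) fun s t => ?_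
    rw [← Real.exp_add]
    ring_nf
  refine H.congr fun t ht => ?_
  rw [integral_exp_mul_Ioi (by linarith)]
  rw [mul_zero, Real.exp_zero, neg_div_neg_eq, one_div]

theorem exp_neg_rpow {r : ℝ} (hr : 0 < r) (hr1 : r ≤ 1) :
    IsPosDefHankel fun t => Real.exp (-(t ^ r)) := by
  rcases hr1.eq_or_lt with rfl | hr1
  · refine of_mul (g := fun t => Real.exp (-t)) fun s t => ?_
    rw [← Real.exp_add, Real.rpow_one]
    ring_nf
  have hp : r ∈ Ioo (0 : ℝ) 1 := ⟨hr, hr1⟩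
  set C := (∫ t in Ioi 0, Real.rpowIntegrand₀₁ r t 1)⁻¹ with hC
  have hC0 : 0 ≤ C := inv_nonneg.2 (Real.integral_rpowIntegrand₀₁_one_pos hp).le
  have hpow (n : ℕ) : IntegrableOn (fun x : ℝ => x ^ (r - 1)) (Ioc 0 (n : ℝ)) :=
    (intervalIntegrable_iff_integrableOn_Ioc_of_le n.cast_nonneg).1
      (intervalIntegral.intervalIntegrable_rpow' (by linarith))
  have hker (n : ℕ) {t : ℝ} (ht : 0 < t) :
      IntegrableOn (fun x => Real.rpowIntegrand₀₁ r x t) (Ioc 0 (n : ℝ)) :=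
    (Real.integrableOn_rpowIntegrand₀₁_Ioi hp ht.le).mono_set Ioc_subset_Ioi_self
  have heq (n : ℕ) (t : ℝ) : EqOn (fun x : ℝ => x ^ (r - 1) - Real.rpowIntegrand₀₁ r x t)
      (fun x => x ^ r * (x + t)⁻¹) (Ioc 0 (n : ℝ)) := fun x hx => by
    simp [Real.rpowIntegrand₀₁_eq_sub hr1.ne hx.1]
  have hint (n : ℕ) {t : ℝ} (ht : 0 < t) :
      IntegrableOn (fun x => x ^ r * (x + t)⁻¹) (Ioc 0 (n : ℝ)) :=
    ((hpow n).sub (hker n ht)).congr_fun (heq n t) measurableSet_Ioc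
  refine of_tendsto (h := fun n t => Real.exp (-(C * ∫ x in Ioc 0 (n : ℝ), x ^ (r - 1))) *
    Real.exp (C * ∫ x in Ioc 0 (n : ℝ), x ^ r * (x + t)⁻¹)) (fun n => ?_) fun t ht => ?_
  · refine (const (Real.exp_pos _).le).mul (exp ((const hC0).mul
      (setIntegral measurableSet_Ioc (fun x hx => ?_) fun t ht => hint n ht)))
    exact (const (Real.rpow_nonneg hx.1.le r)).mul (inv_add hx.1)
  · have hlim := intervalIntegral_tendsto_integral_Ioi (0 : ℝ)
      (Real.integrableOn_rpowIntegrand₀₁_Ioi hp ht.le) tendsto_natCast_atTop_atTop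
    have := ((hlim.const_mul C).neg).rexp
    rw [hC, ← Real.rpow_eq_const_mul_integral hp ht.le, ← hC] at this
    refine this.congr fun n => ?_
    rw [← Real.exp_add, ← setIntegral_congr_fun measurableSet_Ioc (heq n t),
      integral_sub (hpow n) (hker n ht), intervalIntegral.integral_of_le n.cast_nonneg]
    ring_nf

end IsPosDefHankel

theorem IsTestFun.integrable {f : ℝ → ℂ} (hf : IsTestFun f) : Integrable f :=
  hf.1.continuous.integrable_of_hasCompactSupport hf.2.1

theorem ae_pos_prod_restrict_Ioi : ∀ᵐ z : ℝ × ℝ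
    ∂((volume.restrict (Ioi (0 : ℝ))).prod (volume.restrict (Ioi (0 : ℝ)))), 0 < z.1 ∧ 0 < z.2 := by
  rw [Measure.prod_restrict]
  exact ae_restrict_of_forall_mem (measurableSet_Ioi.prod measurableSet_Ioi) fun z hz => hz

theorem integrable_hankel_kernel {h : ℝ → ℝ} (hm : Measurable h) (hb : ∀ t, 0 < t → |h t| ≤ 1)
    {f : ℝ → ℂ} (hf : IsTestFun f) :
    Integrable (fun z : ℝ × ℝ => (h (z.1 + z.2) : ℂ) * f z.2 * (starRingEnd ℂ) (f z.1))
      ((volume.restrict (Ioi (0 : ℝ))).prod (volume.restrict (Ioi (0 : ℝ)))) := by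
  have hconj : Integrable (fun x => (starRingEnd ℂ) (f x)) := by
    simpa using (Complex.conjLIE.toLinearIsometry.toContinuousLinearMap).integrable_comp hf.integrable
  have := (hconj.restrict (s := Ioi 0)).mul_prod (hf.integrable.restrict (s := Ioi 0))
  refine (this.bdd_mul (f := fun z => (h (z.1 + z.2) : ℂ)) (c := 1)
    (Measurable.aestronglyMeasurable (by fun_prop)) ?_).congr (ae_of_all _ fun z => by ring)
  filter_upwards [ae_pos_prod_restrict_Ioi] with z hz
  simpa using hb _ (add_pos hz.1 hz.2)

theorem hankelQF_eq_integral_prod {h : ℝ → ℝ} (hm : Measurable h)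
    (hb : ∀ t, 0 < t → |h t| ≤ 1) {f : ℝ → ℂ} (hf : IsTestFun f) :
    hankelQF (fun t => (h t : ℂ)) f =
      ∫ z : ℝ × ℝ, (h (z.1 + z.2) : ℂ) * f z.2 * (starRingEnd ℂ) (f z.1)
        ∂((volume.restrict (Ioi (0 : ℝ))).prod (volume.restrict (Ioi (0 : ℝ)))) :=
  (integral_prod _ (integrable_hankel_kernel hm hb hf)).symm

theorem integral_simpleFunc_hankel_nonneg {h : ℝ → ℝ} (hh : IsPosDefHankel h)
    (φ : SimpleFunc ℝ ℝ) (hφ : ∀ x, 0 < φ x) {μ : Measure ℝ} [SFinite μ] {f : ℝ → ℂ}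
    (hf : Integrable f μ) :
    0 ≤ ∫ z : ℝ × ℝ, (h (φ z.1 + φ z.2) : ℂ) * f z.2 * (starRingEnd ℂ) (f z.1) ∂(μ.prod μ) := by
  classical
  set g : ℝ → ℝ → ℂ := fun u => (φ ⁻¹' {u}).indicator f
  have hg (u : ℝ) : Integrable (g u) μ := hf.indicator (φ.measurableSet_preimage _)
  have hgc (u : ℝ) : Integrable (fun x => (starRingEnd ℂ) (g u x)) μ := by
    simpa using (Complex.conjLIE.toLinearIsometry.toContinuousLinearMap).integrable_comp (hg u)
  have hpt (z : ℝ × ℝ) : (h (φ z.1 + φ z.2) : ℂ) * f z.2 * (starRingEnd ℂ) (f z.1) =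
      ∑ u ∈ φ.range, ∑ v ∈ φ.range,
        (h (u + v) : ℂ) * ((starRingEnd ℂ) (g u z.1) * g v z.2) := by
    rw [Finset.sum_eq_single (φ z.1), Finset.sum_eq_single (φ z.2)]
    · simp [g]
      ring
    · intro v _ hv
      simp [g, hv.symm]
    · simp
    · intro u _ hu
      simp [g, hu.symm]
    · simp
  have hint (u v : ℝ) : Integrable (fun z : ℝ × ℝ =>
      (h (u + v) : ℂ) * ((starRingEnd ℂ) (g u z.1) * g v z.2)) (μ.prod μ) :=
    ((hgc u).mul_prod (hg v)).const_mul _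
  simp_rw [hpt]
  rw [integral_finsetSum _ fun u _ => integrable_finsetSum _ fun v _ => hint u v]
  refine (hh.sum_nonneg (S := φ.range) ?_ fun u => ∫ x, g u x ∂μ).trans_eq ?_
  · simpa using hφ
  refine Finset.sum_congr rfl fun u _ => ?_
  rw [integral_finsetSum _ fun v _ => hint u v]
  refine Finset.sum_congr rfl fun v _ => ?_
  rw [integral_const_mul, integral_prod_mul (fun x => (starRingEnd ℂ) (g u x)) (g v),
    integral_conj]
  simp only [RCLike.star_def]
  ring

theorem IsPosDefHankel.hankelQF_nonneg {h : ℝ → ℝ} (hh : IsPosDefHankel h) (hm : Measurable h)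
    (hc : ContinuousOn h (Ioi 0)) (hb : ∀ t, 0 < t → |h t| ≤ 1) {f : ℝ → ℂ} (hf : IsTestFun f) :
    0 ≤ hankelQF (fun t => (h t : ℂ)) f := by
  rw [hankelQF_eq_integral_prod hm hb hf]
  set φ : ℕ → SimpleFunc ℝ ℝ :=
    SimpleFunc.approxOn id measurable_id (Ioi 0) 1 (mem_Ioi.2 one_pos)
  have hφ (n : ℕ) (x : ℝ) : 0 < φ n x := SimpleFunc.approxOn_mem measurable_id _ n x
  have hlim {x : ℝ} (hx : 0 < x) : Tendsto (fun n => φ n x) atTop (𝓝 x) :=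
    SimpleFunc.tendsto_approxOn measurable_id _ (subset_closure hx)
  refine ge_of_tendsto' (x := atTop) (tendsto_integral_of_dominated_convergence
    (F := fun n z => (h (φ n z.1 + φ n z.2) : ℂ) * f z.2 * (starRingEnd ℂ) (f z.1))
    (fun z => ‖f z.1‖ * ‖f z.2‖) (fun n => ?_) ?_ (fun n => ?_) ?_)
    fun n => integral_simpleFunc_hankel_nonneg hh (φ n) (hφ n) hf.integrable.restrict
  · have h1 := hf.1.continuous
    have h2 : Measurable fun z : ℝ × ℝ => h (φ n z.1 + φ n z.2) :=
      hm.comp (((φ n).measurable.comp measurable_fst).add ((φ n).measurable.comp measurable_snd))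
    have h3 : Measurable fun z : ℝ × ℝ => (starRingEnd ℂ) (f z.1) :=
      (Complex.continuous_conj.comp (h1.comp continuous_fst)).measurable
    exact ((h2.complex_ofReal.mul (h1.comp continuous_snd).measurable).mul h3).aestronglyMeasurable
  · exact hf.integrable.norm.restrict.mul_prod hf.integrable.norm.restrict
  · refine ae_of_all _ fun z => ?_
    have := hb _ (add_pos (hφ n z.1) (hφ n z.2))
    simp only [norm_mul, Complex.norm_real, Real.norm_eq_abs, RCLike.norm_conj]
    nlinarith [mul_nonneg (norm_nonneg (f z.1)) (norm_nonneg (f z.2))]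
  · filter_upwards [ae_pos_prod_restrict_Ioi] with z hz
    have hz' : 0 < z.1 + z.2 := add_pos hz.1 hz.2
    have := (hc.continuousAt (Ioi_mem_nhds hz')).tendsto.comp ((hlim hz.1).add (hlim hz.2))
    exact (((Complex.continuous_ofReal.tendsto _).comp this).mul_const _).mul_const _

theorem IsTestFun.ofReal {f : ℝ → ℝ} (hf : ContDiff ℝ (⊤ : ℕ∞) f) (hc : HasCompactSupport f)
    (hs : tsupport f ⊆ Ioi 0) : IsTestFun fun x => (f x : ℂ) := by
  refine ⟨Complex.ofRealCLM.contDiff.comp hf, hc.comp_left Complex.ofReal_zero, ?_⟩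
  exact (closure_mono (Function.support_comp_subset Complex.ofReal_zero f)).trans hs

theorem hankelQF_ofReal {h : ℝ → ℝ} (hm : Measurable h) (hb : ∀ t, 0 < t → |h t| ≤ 1)
    {f : ℝ → ℝ} (hf : IsTestFun fun x => (f x : ℂ)) :
    hankelQF (fun t => (h t : ℂ)) (fun x => (f x : ℂ)) =
      ((∫ z : ℝ × ℝ, h (z.1 + z.2) * f z.2 * f z.1
        ∂((volume.restrict (Ioi (0 : ℝ))).prod (volume.restrict (Ioi (0 : ℝ)))) : ℝ) : ℂ) := by
  rw [hankelQF_eq_integral_prod hm hb hf, ← integral_complex_ofReal]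
  simp

theorem integrable_hankel_kernel_real {h : ℝ → ℝ} (hm : Measurable h)
    (hb : ∀ t, 0 < t → |h t| ≤ 1) {f : ℝ → ℝ} (hf : IsTestFun fun x => (f x : ℂ)) :
    Integrable (fun z : ℝ × ℝ => h (z.1 + z.2) * f z.2 * f z.1)
      ((volume.restrict (Ioi (0 : ℝ))).prod (volume.restrict (Ioi (0 : ℝ)))) := by
  simpa using (integrable_hankel_kernel hm hb hf).re

/-- A nonnegative smooth bump of mass one supported in `[a - ε, a + ε]`. -/
structure IsUnitBump (a ε : ℝ) (ρ : ℝ → ℝ) : Prop where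
  contDiff : ContDiff ℝ (⊤ : ℕ∞) ρ
  hasCompactSupport : HasCompactSupport ρ
  tsupport_subset : tsupport ρ ⊆ Icc (a - ε) (a + ε)
  nonneg : ∀ x, 0 ≤ ρ x
  integral_eq_one : ∫ x, ρ x = 1

theorem exists_isUnitBump (a : ℝ) {ε : ℝ} (hε : 0 < ε) : ∃ ρ, IsUnitBump a ε ρ := by
  let b : ContDiffBump a := ⟨ε / 2, ε, by linarith, by linarith⟩
  refine ⟨b.normed volume, b.contDiff_normed, b.hasCompactSupport_normed, ?_,
    b.nonneg_normed, b.integral_normed⟩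
  rw [b.tsupport_normed_eq, Real.closedBall_eq_Icc]

namespace IsUnitBump

variable {a b ε : ℝ} {ρ σ : ℝ → ℝ}

theorem tsupport_subset_Ioi (hρ : IsUnitBump a ε ρ) (ha : ε < a) : tsupport ρ ⊆ Ioi 0 :=
  fun _ hx => (sub_pos.2 ha).trans_le (hρ.tsupport_subset hx).1

theorem mem_Icc (hρ : IsUnitBump a ε ρ) {x : ℝ} (hx : ρ x ≠ 0) : x ∈ Icc (a - ε) (a + ε) :=
  hρ.tsupport_subset (subset_tsupport _ hx)

theorem integrable (hρ : IsUnitBump a ε ρ) : Integrable ρ :=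
  hρ.contDiff.continuous.integrable_of_hasCompactSupport hρ.hasCompactSupport

theorem setIntegral_Ioi (hρ : IsUnitBump a ε ρ) (ha : ε < a) : ∫ x in Ioi 0, ρ x = 1 := by
  rw [setIntegral_eq_integral_of_forall_compl_eq_zero, hρ.integral_eq_one]
  intro x hx
  by_contra h
  exact hx (hρ.tsupport_subset_Ioi ha (subset_tsupport _ h))

theorem integral_prod (hρ : IsUnitBump a ε ρ) (hσ : IsUnitBump b ε σ) (ha : ε < a) (hb : ε < b) :
    ∫ z : ℝ × ℝ, ρ z.1 * σ z.2
      ∂((volume.restrict (Ioi (0 : ℝ))).prod (volume.restrict (Ioi (0 : ℝ)))) = 1 := by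
  rw [integral_prod_mul, hρ.setIntegral_Ioi ha, hσ.setIntegral_Ioi hb, one_mul]

theorem integrable_prod (hρ : IsUnitBump a ε ρ) (hσ : IsUnitBump b ε σ) :
    Integrable (fun z : ℝ × ℝ => ρ z.1 * σ z.2)
      ((volume.restrict (Ioi (0 : ℝ))).prod (volume.restrict (Ioi (0 : ℝ)))) :=
  hρ.integrable.restrict.mul_prod hσ.integrable.restrict

theorem mul_le_kernel {h : ℝ → ℝ} (hh : AntitoneOn h (Ioi 0)) (hρ : IsUnitBump a ε ρ)
    (hσ : IsUnitBump b ε σ) (ha : ε < a) (hb : ε < b) (x y : ℝ) :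
    h (a + b + 2 * ε) * (ρ x * σ y) ≤ h (x + y) * (ρ x * σ y) := by
  by_cases hx : ρ x = 0
  · simp [hx]
  by_cases hy : σ y = 0
  · simp [hy]
  obtain ⟨h1, h2⟩ := hρ.mem_Icc hx
  obtain ⟨h3, h4⟩ := hσ.mem_Icc hy
  refine mul_le_mul_of_nonneg_right ?_ (mul_nonneg (hρ.nonneg x) (hσ.nonneg y))
  refine hh (mem_Ioi.2 ?_) (mem_Ioi.2 ?_) ?_ <;> linarith

theorem kernel_le_mul {h : ℝ → ℝ} (hh : AntitoneOn h (Ioi 0)) (hρ : IsUnitBump a ε ρ)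
    (hσ : IsUnitBump b ε σ) (ha : ε < a) (hb : ε < b) (x y : ℝ) :
    h (x + y) * (ρ x * σ y) ≤ h (a + b - 2 * ε) * (ρ x * σ y) := by
  by_cases hx : ρ x = 0
  · simp [hx]
  by_cases hy : σ y = 0
  · simp [hy]
  obtain ⟨h1, h2⟩ := hρ.mem_Icc hx
  obtain ⟨h3, h4⟩ := hσ.mem_Icc hy
  refine mul_le_mul_of_nonneg_right ?_ (mul_nonneg (hρ.nonneg x) (hσ.nonneg y))
  refine hh (mem_Ioi.2 ?_) (mem_Ioi.2 ?_) ?_ <;> linarith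

end IsUnitBump

theorem exists_hankelQF_pos {h : ℝ → ℝ} (hm : Measurable h) (hb : ∀ t, 0 < t → |h t| ≤ 1)
    (hh : AntitoneOn h (Ioi 0)) (hpos : ∀ t, 0 < t → 0 < h t) :
    ∃ f, IsTestFun f ∧ 0 < hankelQF (fun t => (h t : ℂ)) f := by
  obtain ⟨ρ, hρ⟩ := exists_isUnitBump 2 one_pos
  have hf : IsTestFun fun x => (ρ x : ℂ) := .ofReal hρ.contDiff hρ.hasCompactSupport
    (hρ.tsupport_subset_Ioi one_lt_two)
  refine ⟨_, hf, ?_⟩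
  rw [hankelQF_ofReal hm hb hf, Complex.zero_lt_real]
  have hle := integral_mono ((hρ.integrable_prod hρ).const_mul (h (2 + 2 + 2 * 1)))
    (integrable_hankel_kernel_real hm hb hf) fun z =>
      (hρ.mul_le_kernel hh hρ one_lt_two one_lt_two z.1 z.2).trans_eq (by ring)
  rw [integral_const_mul, hρ.integral_prod hρ one_lt_two one_lt_two, mul_one] at hle
  exact (hpos _ (by norm_num)).trans_le hle

theorem exists_hankelQF_neg {h : ℝ → ℝ} (hc : Continuous h) (hb : ∀ t, 0 < t → |h t| ≤ 1)
    (hh : AntitoneOn h (Ioi 0)) (hpos : ∀ t, 0 < t → 0 < h t) {a b : ℝ} (ha : 0 < a) (hb0 : 0 < b)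
    (hlog : h (a + a) * h (b + b) < h (a + b) ^ 2) :
    ∃ f, IsTestFun f ∧ hankelQF (fun t => (h t : ℂ)) f < 0 := by
  set α := h (a + b)
  set β := h (a + a)
  have hα : 0 < α := hpos _ (by positivity)
  have hβ : 0 < β := hpos _ (by positivity)
  let q : ℝ → ℝ := fun ε => α ^ 2 * h (a + a - 2 * ε) - 2 * (α * β * h (a + b + 2 * ε)) +
    β ^ 2 * h (b + b - 2 * ε)
  have hq : Tendsto q (𝓝[>] 0) (𝓝 (q 0)) :=
    ((by fun_prop : Continuous q).tendsto 0).mono_left nhdsWithin_le_nhds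
  have hq0 : q 0 < 0 := by
    have : q 0 = β * (β * h (b + b) - α ^ 2) := by
      simp only [q, mul_zero, sub_zero, add_zero]
      ring
    rw [this]
    exact mul_neg_of_pos_of_neg hβ (sub_neg.2 hlog)
  obtain ⟨ε, hqε, hε, hεa, hεb⟩ := ((hq.eventually_lt_const hq0).and
    (eventually_mem_nhdsWithin.and ((eventually_nhdsWithin_of_eventually_nhds
      (eventually_lt_nhds ha)).and (eventually_nhdsWithin_of_eventually_nhds
      (eventually_lt_nhds hb0))))).exists
  obtain ⟨ρ, hρ⟩ := exists_isUnitBump a hε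
  obtain ⟨σ, hσ⟩ := exists_isUnitBump b hε
  have hf : IsTestFun fun x => ((α * ρ x - β * σ x : ℝ) : ℂ) := by
    refine .ofReal ((contDiff_const.mul hρ.contDiff).sub (contDiff_const.mul hσ.contDiff))
      (hρ.hasCompactSupport.mul_left.sub hσ.hasCompactSupport.mul_left) ?_
    refine (tsupport_sub _ _).trans (union_subset ?_ ?_)
    · exact (tsupport_mul_subset_right (f := fun _ => α)).trans (hρ.tsupport_subset_Ioi hεa)
    · exact (tsupport_mul_subset_right (f := fun _ => β)).trans (hσ.tsupport_subset_Ioi hεb)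
  refine ⟨_, hf, ?_⟩
  rw [hankelQF_ofReal hc.measurable hb hf, ← Complex.ofReal_zero, Complex.real_lt_real]
  refine lt_of_le_of_lt ?_ hqε
  have i₁ := (hρ.integrable_prod hρ).const_mul (α ^ 2 * h (a + a - 2 * ε))
  have i₂ := (hρ.integrable_prod hσ).const_mul (α * β * h (a + b + 2 * ε))
  have i₃ := (hσ.integrable_prod hρ).const_mul (α * β * h (a + b + 2 * ε))
  have i₄ := (hσ.integrable_prod hσ).const_mul (β ^ 2 * h (b + b - 2 * ε))
  refine (integral_mono (integrable_hankel_kernel_real hc.measurable hb hf)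
    (((i₁.sub i₂).sub i₃).add i₄) fun z => ?_).trans_eq ?_
  · have e₁ := mul_le_mul_of_nonneg_left (hρ.kernel_le_mul hh hρ hεa hεa z.1 z.2) (sq_nonneg α)
    have e₂ := mul_le_mul_of_nonneg_left (hρ.mul_le_kernel hh hσ hεa hεb z.1 z.2)
      (mul_pos hα hβ).le
    have e₃ := mul_le_mul_of_nonneg_left (hσ.mul_le_kernel hh hρ hεb hεa z.1 z.2)
      (mul_pos hα hβ).le
    have e₄ := mul_le_mul_of_nonneg_left (hσ.kernel_le_mul hh hσ hεb hεb z.1 z.2) (sq_nonneg β)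
    rw [add_comm b a] at e₃
    simp only [Pi.add_apply, Pi.sub_apply]
    linarith
  · rw [integral_add' ((i₁.sub i₂).sub i₃) i₄, integral_sub' (i₁.sub i₂) i₃, integral_sub' i₁ i₂]
    simp only [integral_const_mul, hρ.integral_prod hρ hεa hεa, hρ.integral_prod hσ hεa hεb,
      hσ.integral_prod hρ hεb hεa, hσ.integral_prod hσ hεb hεb, q]
    ring

end

/-- The Hankel form with kernel `h(t) = e^{-t^r}` (`r > 0`) is positive iff `r ≤ 1`;
for `r > 1` it is not sign-definite. -/
theorem hankel_stretched_exp_kernel (r : ℝ) (hr : 0 < r) :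
    ((r ≤ 1) → ∀ f : ℝ → ℂ, IsTestFun f →
      0 ≤ hankelQF (fun t : ℝ => ((Real.exp (-(t ^ r)) : ℝ) : ℂ)) f)
    ∧ ((1 < r) →
      (∃ fp : ℝ → ℂ, IsTestFun fp ∧
        0 < hankelQF (fun t : ℝ => ((Real.exp (-(t ^ r)) : ℝ) : ℂ)) fp) ∧
      (∃ fm : ℝ → ℂ, IsTestFun fm ∧
        hankelQF (fun t : ℝ => ((Real.exp (-(t ^ r)) : ℝ) : ℂ)) fm < 0)) := by
  have hc : Continuous fun t : ℝ => Real.exp (-(t ^ r)) := by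
    have := Real.continuous_rpow_const hr.le
    fun_prop
  have hb (t : ℝ) (ht : 0 < t) : |Real.exp (-(t ^ r))| ≤ 1 := by
    rw [Real.abs_exp, Real.exp_le_one_iff, neg_nonpos]
    positivity
  refine ⟨fun hr1 f hf => (IsPosDefHankel.exp_neg_rpow hr hr1).hankelQF_nonneg hc.measurable
    hc.continuousOn hb hf, fun hr1 => ?_⟩
  have hh : AntitoneOn (fun t : ℝ => Real.exp (-(t ^ r))) (Set.Ioi 0) := fun x hx y _ hxy =>
    Real.exp_le_exp.2 (neg_le_neg (Real.rpow_le_rpow (le_of_lt hx) hxy hr.le))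
  have hpos (t : ℝ) (_ : 0 < t) : 0 < Real.exp (-(t ^ r)) := Real.exp_pos _
  refine ⟨exists_hankelQF_pos hc.measurable hb hh hpos,
    exists_hankelQF_neg hc hb hh hpos one_pos two_pos ?_⟩
  have hconv := (strictConvexOn_rpow hr1).2 (x := 2) (y := 4) (by simp) (by simp) (by norm_num)
    (one_half_pos (α := ℝ)) (one_half_pos (α := ℝ)) (by norm_num)
  rw [← Real.exp_add, ← Real.exp_nat_mul, Real.exp_lt_exp]
  norm_num [smul_eq_mul] at hconv ⊢
  linarith
end
end
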